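/- arXiv:1808.06600 — 4 statements merged into one kernel-verified Lean document; each statement's English description precedes it below -/
import Mathlib

section
/- Let R = ⊕_{i≥0} R_i be a commutative Noetherian ℕ-graded ring with R₀ = k a field, finitely generated as a k-algebra, with graded maximal ideal m = ⊕_{i≥1} R_i. Let M and N be finitely generated graded R-modules, and assume M has no nonzero free direct summand. If an R-linear map f : M → N factors through a free R-module, then f(M) ⊆ mN. -/
/-- The degree `n` component of an element of an ℕ-graded ring, for `n` an integer. -/
noncomputable def intProj {k R : Type*} [CommSemiring k] [CommRing R] [Algebra k R]
    (𝒜 : ℕ → Submodule k R) [GradedAlgebra 𝒜] (n : ℤ) : R →+ R :=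
  if 0 ≤ n then GradedRing.proj 𝒜 n.toNat else 0

section IntProj

variable {k R : Type*} [CommSemiring k] [CommRing R] [Algebra k R]
  (𝒜 : ℕ → Submodule k R) [GradedAlgebra 𝒜]

theorem intProj_intProj_self (n : ℤ) (r : R) :
    intProj 𝒜 n (intProj 𝒜 n r) = intProj 𝒜 n r := by
  unfold intProj
  split_ifs
  · simp [GradedRing.proj_apply]
  · simp

theorem intProj_intProj_of_ne {m n : ℤ} (h : m ≠ n) (r : R) :
    intProj 𝒜 m (intProj 𝒜 n r) = 0 := by
  unfold intProj
  split_ifs with hm hn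
  · simp only [GradedRing.proj_apply]
    exact DirectSum.decompose_of_mem_ne 𝒜 (SetLike.coe_mem _) (by omega)
  all_goals simp

theorem intProj_mul_of_left_mem {a : ℕ} {r : R} (hr : r ∈ 𝒜 a) (n : ℤ) (s : R) :
    intProj 𝒜 (a + n) (r * s) = r * intProj 𝒜 n s := by
  unfold intProj
  split_ifs with h1 h2 h2
  · simp only [GradedRing.proj_apply]
    rw [DirectSum.coe_decompose_mul_of_left_mem_of_le 𝒜 hr (by omega),
      show (a + n).toNat - a = n.toNat by omega]
  · simp only [GradedRing.proj_apply, AddMonoidHom.zero_apply, mul_zero]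
    exact DirectSum.coe_decompose_mul_of_left_mem_of_not_le 𝒜 hr (by omega)
  · omega
  · simp

variable {M : Type*} [AddCommGroup M] [Module R M]
  (ℳ : ℤ → AddSubgroup M) [DirectSum.Decomposition ℳ]

/-- The additive map sending `y ∈ ℳ i` to the degree `i - j` component of `φ y`. -/
noncomputable def homogeneousPartAddHom (φ : M →ₗ[R] R) (j : ℤ) : M →+ R :=
  (DirectSum.toAddMonoid fun i : ℤ =>
    ((intProj 𝒜 (i - j)).comp φ.toAddMonoidHom).comp (ℳ i).subtype).comp
    (DirectSum.decomposeAddEquiv ℳ).toAddMonoidHom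

theorem homogeneousPartAddHom_of_mem (φ : M →ₗ[R] R) (j : ℤ) {i : ℤ} {y : M} (hy : y ∈ ℳ i) :
    homogeneousPartAddHom 𝒜 ℳ φ j y = intProj 𝒜 (i - j) (φ y) := by
  lift y to ℳ i using hy
  simp [homogeneousPartAddHom]

theorem homogeneousPartAddHom_smul
    (hℳ : ∀ (i : ℕ) (j : ℤ) (r : R) (x : M), r ∈ 𝒜 i → x ∈ ℳ j → r • x ∈ ℳ ((i : ℤ) + j))
    (φ : M →ₗ[R] R) (j : ℤ) (r : R) (y : M) :
    homogeneousPartAddHom 𝒜 ℳ φ j (r • y) = r * homogeneousPartAddHom 𝒜 ℳ φ j y := by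
  induction y using DirectSum.Decomposition.inductionOn ℳ with
  | zero => simp
  | add y z hy hz => rw [smul_add, map_add, map_add, hy, hz, mul_add]
  | @homogeneous i y =>
    induction r using DirectSum.Decomposition.inductionOn 𝒜 with
    | zero => simp
    | add r s hr hs => rw [add_smul, map_add, hr, hs, add_mul]
    | @homogeneous a r =>
      rw [homogeneousPartAddHom_of_mem 𝒜 ℳ φ j (hℳ a i r y r.2 y.2),
        homogeneousPartAddHom_of_mem 𝒜 ℳ φ j y.2, map_smul, smul_eq_mul, add_sub_assoc,
        intProj_mul_of_left_mem 𝒜 r.2]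

theorem homogeneousPartAddHom_decompose (φ : M →ₗ[R] R) (j i : ℤ) (y : M) :
    homogeneousPartAddHom 𝒜 ℳ φ j (DirectSum.decompose ℳ y i) =
      intProj 𝒜 (i - j) (homogeneousPartAddHom 𝒜 ℳ φ j y) := by
  induction y using DirectSum.Decomposition.inductionOn ℳ with
  | zero => simp
  | add y z hy hz => simp [DirectSum.decompose_add, hy, hz]
  | @homogeneous l y =>
    rw [homogeneousPartAddHom_of_mem 𝒜 ℳ φ j y.2]
    by_cases h : l = i
    · subst h
      rw [DirectSum.decompose_of_mem_same ℳ y.2, intProj_intProj_self,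
        homogeneousPartAddHom_of_mem 𝒜 ℳ φ j y.2]
    · rw [DirectSum.decompose_of_mem_ne ℳ y.2 h, map_zero, intProj_intProj_of_ne 𝒜 (by omega)]

theorem decompose_mem_span_singleton
    (hℳ : ∀ (i : ℕ) (j : ℤ) (r : R) (x : M), r ∈ 𝒜 i → x ∈ ℳ j → r • x ∈ ℳ ((i : ℤ) + j))
    {j : ℤ} {x : M} (hx : x ∈ ℳ j) (i : ℤ) {y : M} (hy : y ∈ Submodule.span R {x}) :
    (DirectSum.decompose ℳ y i : M) ∈ Submodule.span R {x} := by
  obtain ⟨r, rfl⟩ := Submodule.mem_span_singleton.1 hy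
  clear hy
  induction r using DirectSum.Decomposition.inductionOn 𝒜 with
  | zero => simp
  | add r s hr hs =>
    rw [add_smul, DirectSum.decompose_add, DirectSum.add_apply, AddSubgroup.coe_add]
    exact add_mem hr hs
  | @homogeneous a r =>
    have hrx := hℳ a j r x r.2 hx
    by_cases h : (a : ℤ) + j = i
    · subst h
      rw [DirectSum.decompose_of_mem_same ℳ hrx]
      exact Submodule.smul_mem _ _ (Submodule.mem_span_singleton_self x)
    · rw [DirectSum.decompose_of_mem_ne ℳ hrx h]
      exact zero_mem _

/-- A linear functional taking a unit value at `x` splits off the free module spanned by `x`. -/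
theorem isCompl_span_singleton_ker {ψ : M →ₗ[R] R} {x : M} (h : IsUnit (ψ x)) :
    IsCompl (Submodule.span R {x}) (LinearMap.ker ψ) := by
  obtain ⟨u, hu⟩ := h
  refine IsCompl.of_le ?_ ?_
  · rintro y ⟨hy, hy'⟩
    obtain ⟨r, rfl⟩ := Submodule.mem_span_singleton.1 hy
    have hr : r * (u : R) = 0 := by simpa [hu] using hy'
    simp [(Units.mul_left_eq_zero u).1 hr]
  · intro y _
    rw [← add_sub_cancel ((ψ y * (↑u⁻¹ : R)) • x) y]
    refine Submodule.add_mem_sup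
      (Submodule.smul_mem _ _ (Submodule.mem_span_singleton_self x)) ?_
    simp [← hu, mul_assoc]

theorem free_span_singleton {ψ : M →ₗ[R] R} {x : M} (h : IsUnit (ψ x)) :
    Module.Free R (Submodule.span R {x}) := by
  refine Module.Free.of_equiv (LinearEquiv.ofInjective (LinearMap.toSpanSingleton R M x) ?_ ≪≫ₗ
    LinearEquiv.ofEq _ _ (LinearMap.range_toSpanSingleton x))
  rw [← LinearMap.ker_eq_bot, LinearMap.ker_eq_bot']
  intro r hr
  have : ψ (r • x) = 0 := by simpa using congrArg ψ hr
  rw [map_smul, smul_eq_mul] at this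
  exact h.mul_left_eq_zero.1 this

end IntProj

/-- If `M` has no nonzero graded free direct summand, every functional on `M` takes values in the
irrelevant ideal. -/
theorem apply_mem_irrelevant_of_no_free_summand {k R M : Type*} [Field k] [CommRing R]
    [Algebra k R] (𝒜 : ℕ → Submodule k R) [GradedAlgebra 𝒜] (h0 : 𝒜 0 = 1)
    [AddCommGroup M] [Module R M] (ℳ : ℤ → AddSubgroup M) [DirectSum.Decomposition ℳ]
    (hℳ : ∀ (i : ℕ) (j : ℤ) (r : R) (x : M), r ∈ 𝒜 i → x ∈ ℳ j → r • x ∈ ℳ ((i : ℤ) + j))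
    (hM : ¬ ∃ (F M' : Submodule R M), IsCompl F M' ∧
      (∀ (j : ℤ), ∀ x ∈ F, ((DirectSum.decompose ℳ x j : ℳ j) : M) ∈ F) ∧
      (∀ (j : ℤ), ∀ x ∈ M', ((DirectSum.decompose ℳ x j : ℳ j) : M) ∈ M') ∧
      Module.Free R ↥F ∧ F ≠ ⊥)
    (φ : M →ₗ[R] R) (y : M) : φ y ∈ (HomogeneousIdeal.irrelevant 𝒜).toIdeal := by
  induction y using DirectSum.Decomposition.inductionOn ℳ with
  | zero => simp
  | add y z hy hz => rw [map_add]; exact add_mem hy hz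
  | @homogeneous j x =>
    by_contra hx
    have hne : GradedRing.proj 𝒜 0 (φ x) ≠ 0 := fun h =>
      hx ((HomogeneousIdeal.mem_irrelevant_iff 𝒜 _).2 h)
    let ψ : M →ₗ[R] R :=
      { homogeneousPartAddHom 𝒜 ℳ φ j with
        map_smul' := homogeneousPartAddHom_smul 𝒜 ℳ hℳ φ j }
    have hψ : ψ x = GradedRing.proj 𝒜 0 (φ x) := by
      refine (homogeneousPartAddHom_of_mem 𝒜 ℳ φ j x.2).trans ?_
      simp [intProj]
    have hunit : IsUnit (ψ x) := by
      have hmem : ψ x ∈ (1 : Submodule k R) := by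
        rw [hψ, ← h0, GradedRing.proj_apply]
        exact SetLike.coe_mem _
      obtain ⟨c, hc⟩ := Submodule.mem_one.1 hmem
      rw [← hc]
      refine (IsUnit.mk0 c ?_).map (algebraMap k R)
      rintro rfl
      exact hne (by rw [← hψ, ← hc, map_zero])
    refine hM ⟨Submodule.span R {(x : M)}, LinearMap.ker ψ, isCompl_span_singleton_ker hunit,
      fun i y hy => decompose_mem_span_singleton 𝒜 ℳ hℳ x.2 i hy, fun i y hy => ?_,
      free_span_singleton hunit, fun h => ?_⟩
    · have hy' : homogeneousPartAddHom 𝒜 ℳ φ j y = 0 := hy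
      refine (homogeneousPartAddHom_decompose 𝒜 ℳ φ j i y).trans ?_
      rw [hy', map_zero]
    · rw [Submodule.span_singleton_eq_bot] at h
      exact hne (by rw [← hψ, h, map_zero])

/-- A map from `M` that factors through a free module has image in `I • ⊤` as soon as all
functionals on `M` take values in `I`. -/
theorem range_comp_le_smul_top {R M G N : Type*} [CommRing R] [AddCommGroup M] [Module R M]
    [AddCommGroup G] [Module R G] [Module.Free R G] [AddCommGroup N] [Module R N] {I : Ideal R}
    (hI : ∀ (φ : M →ₗ[R] R) (y : M), φ y ∈ I) (α : M →ₗ[R] G) (β : G →ₗ[R] N) :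
    LinearMap.range (β ∘ₗ α) ≤ I • (⊤ : Submodule R N) := by
  rintro _ ⟨y, rfl⟩
  let b := Module.Free.chooseBasis R G
  rw [LinearMap.comp_apply, ← b.linearCombination_repr (α y), Finsupp.linearCombination_apply,
    Finsupp.sum, map_sum]
  refine Submodule.sum_mem _ fun i _ => ?_
  rw [map_smul]
  exact Submodule.smul_mem_smul (hI (b.coord i ∘ₗ α) y) Submodule.mem_top

/-- Let `R` be a commutative Noetherian ℕ-graded ring with `R₀ = k`
a field, finitely generated as a `k`-algebra, with graded maximal ideal `m`
(the irrelevant ideal).  Let `M`, `N` be finitely generated graded `R`-modules and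
assume `M` has no nonzero (graded) free direct summand.  If `f : M → N` factors
through a free `R`-module, then `f(M) ⊆ mN`. -/
theorem stmt_3 {k R M N : Type} [Field k] [CommRing R] [IsNoetherianRing R] [Algebra k R]
    (𝒜 : ℕ → Submodule k R) [GradedAlgebra 𝒜] (h0 : 𝒜 0 = 1) [Algebra.FiniteType k R]
    [AddCommGroup M] [Module R M] [Module.Finite R M]
    [AddCommGroup N] [Module R N] [Module.Finite R N]
    (ℳ : ℤ → AddSubgroup M) (𝒩 : ℤ → AddSubgroup N)
    [DirectSum.Decomposition ℳ] [DirectSum.Decomposition 𝒩]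
    (hℳ : ∀ (i : ℕ) (j : ℤ) (r : R) (x : M), r ∈ 𝒜 i → x ∈ ℳ j → r • x ∈ ℳ ((i : ℤ) + j))
    (h𝒩 : ∀ (i : ℕ) (j : ℤ) (r : R) (x : N), r ∈ 𝒜 i → x ∈ 𝒩 j → r • x ∈ 𝒩 ((i : ℤ) + j))
    (hM : ¬ ∃ (F M' : Submodule R M), IsCompl F M' ∧
      (∀ (j : ℤ), ∀ x ∈ F, ((DirectSum.decompose ℳ x j : ℳ j) : M) ∈ F) ∧
      (∀ (j : ℤ), ∀ x ∈ M', ((DirectSum.decompose ℳ x j : ℳ j) : M) ∈ M') ∧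
      Module.Free R ↥F ∧ F ≠ ⊥)
    (f : M →ₗ[R] N)
    (hf : ∃ (G : Type) (_ : AddCommGroup G) (_ : Module R G), Module.Free R G ∧
      ∃ (α : M →ₗ[R] G) (β : G →ₗ[R] N), f = β ∘ₗ α) :
    LinearMap.range f ≤ (HomogeneousIdeal.irrelevant 𝒜).toIdeal • (⊤ : Submodule R N) := by
  obtain ⟨G, _, _, _, α, β, rfl⟩ := hf
  exact range_comp_le_smul_top
    (apply_mem_irrelevant_of_no_free_summand 𝒜 h0 ℳ hℳ hM) α β
end

section
/- Let m₁ and m₂ be relatively prime integers with m₁ ≥ 2 and m₂ ≥ 2, let a ≥ 2 be an integer, and let b, c be nonnegative integers with b + c ≥ 2 and gcd(a, b·m₁ + c·m₂) = 1. Set F = a(m₁m₂ − m₁ − m₂) + (a − 1)(b·m₁ + c·m₂). Then 2F > a·m₁·m₂ and 2F > a·(b·m₁ + c·m₂). -/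
/-- Condition (*) for three-generated complete intersection
numerical semigroups: with `m₁, m₂ ≥ 2` coprime, `a ≥ 2`, `b, c ≥ 0`, `b + c ≥ 2`,
`gcd(a, bm₁ + cm₂) = 1`, and `F = a(m₁m₂ − m₁ − m₂) + (a − 1)(bm₁ + cm₂)`,
we have `2F > am₁m₂` and `2F > a(bm₁ + cm₂)`. -/
theorem stmt_7 (m₁ m₂ a b c F : ℤ) (hm₁ : 2 ≤ m₁) (hm₂ : 2 ≤ m₂)
    (hm : Int.gcd m₁ m₂ = 1) (ha : 2 ≤ a) (hb : 0 ≤ b) (hc : 0 ≤ c)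
    (hbc : 2 ≤ b + c) (hgcd : Int.gcd a (b * m₁ + c * m₂) = 1)
    (hF : F = a * (m₁ * m₂ - m₁ - m₂) + (a - 1) * (b * m₁ + c * m₂)) :
    2 * F > a * m₁ * m₂ ∧ 2 * F > a * (b * m₁ + c * m₂) := by
  have hne : m₁ ≠ m₂ := by
    rintro rfl
    rw [Int.gcd_self] at hm
    omega
  have hfrob : 1 ≤ m₁ * m₂ - m₁ - m₂ := by
    rcases lt_or_gt_of_ne hne with h | h <;> nlinarith
  have hprod : 0 ≤ (m₁ - 2) * (m₂ - 2) := mul_nonneg (by linarith) (by linarith)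
  have hN : 4 ≤ b * m₁ + c * m₂ := by nlinarith
  generalize b * m₁ + c * m₂ = N at *
  subst hF
  constructor
  · have key : 0 < 2 * (a - 1) * N - 4 * a := by
      rcases hN.eq_or_lt with rfl | hN
      · have ha2 : a ≠ 2 := by
          rintro rfl
          exact absurd hgcd (by decide)
        omega
      · nlinarith
    nlinarith [mul_nonneg (by linarith : 0 ≤ a) hprod]
  · nlinarith [mul_nonneg (by linarith : 0 ≤ a - 2) (by linarith : 0 ≤ N)]
end

section
/- Let a₁, a₂ be relatively prime integers ≥ 2, let a′₁, a′₂ be relatively prime integers ≥ 2, let λ ≥ 2 and μ ≥ 2 be integers, and let d be an integer with d ≥ λμ. Set F = d + μ(a₁a₂ − a₁ − a₂) + λ(a′₁a′₂ − a′₁ − a′₂). Then 2F > d, 2F > μ·a₁·a₂, and 2F > λ·a′₁·a′₂. -/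
/-- The Frobenius number `ab - a - b` of two coprime integers `a, b ≥ 2` is positive. -/
theorem one_le_mul_sub_sub_of_gcd_eq_one {a b : ℤ} (ha : 2 ≤ a) (hb : 2 ≤ b)
    (hab : Int.gcd a b = 1) : 1 ≤ a * b - a - b := by
  rcases ha.eq_or_lt with rfl | ha'
  · rcases hb.eq_or_lt with rfl | hb'
    · simp at hab
    · linarith
  · nlinarith

/-- Both inequalities for the relations of the two glued semigroups are instances of this one. -/
theorem mul_mul_lt_two_mul_frobenius {a b c l m d : ℤ} (ha : 2 ≤ a) (hb : 2 ≤ b)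
    (hc : 1 ≤ c) (hl : 2 ≤ l) (hm : 2 ≤ m) (hd : l * m ≤ d) :
    m * (a * b) < 2 * (d + m * (a * b - a - b) + l * c) := by
  have hab : 0 ≤ m * ((a - 2) * (b - 2)) :=
    mul_nonneg (by linarith) (mul_nonneg (by linarith) (by linarith))
  have hlm : 0 ≤ (l - 2) * m := mul_nonneg (by linarith) (by linarith)
  have hlc : 0 ≤ l * (c - 1) := mul_nonneg (by linarith) (by linarith)
  linarith

/-- Condition (*) for a gluing of two two-generated numerical
semigroups: with `a₁, a₂ ≥ 2` coprime, `a₁', a₂' ≥ 2` coprime, `λ, μ ≥ 2`,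
`d ≥ λμ`, and `F = d + μ(a₁a₂ − a₁ − a₂) + λ(a₁'a₂' − a₁' − a₂')`, we have
`2F > d`, `2F > μa₁a₂`, and `2F > λa₁'a₂'`. -/
theorem stmt_8 (a₁ a₂ a₁' a₂' lam mu d F : ℤ)
    (h1 : 2 ≤ a₁) (h2 : 2 ≤ a₂) (hco : Int.gcd a₁ a₂ = 1)
    (h1' : 2 ≤ a₁') (h2' : 2 ≤ a₂') (hco' : Int.gcd a₁' a₂' = 1)
    (hlam : 2 ≤ lam) (hmu : 2 ≤ mu) (hd : lam * mu ≤ d)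
    (hF : F = d + mu * (a₁ * a₂ - a₁ - a₂) + lam * (a₁' * a₂' - a₁' - a₂')) :
    2 * F > d ∧ 2 * F > mu * (a₁ * a₂) ∧ 2 * F > lam * (a₁' * a₂') := by
  have hc := one_le_mul_sub_sub_of_gcd_eq_one h1 h2 hco
  have hc' := one_le_mul_sub_sub_of_gcd_eq_one h1' h2' hco'
  have h := mul_mul_lt_two_mul_frobenius h1 h2 hc' hlam hmu hd
  have h' := mul_mul_lt_two_mul_frobenius h1' h2' hc hmu hlam (mul_comm lam mu ▸ hd)
  refine ⟨?_, by linarith, by linarith⟩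
  have hlm : 0 < lam * mu := mul_pos (by linarith) (by linarith)
  have hmc : 0 < mu * (a₁ * a₂ - a₁ - a₂) := mul_pos (by linarith) (by linarith)
  have hlc : 0 < lam * (a₁' * a₂' - a₁' - a₂') := mul_pos (by linarith) (by linarith)
  linarith
end

section
/- Let λ ≥ 2 and μ ≥ 2 be integers, let F and F′ be integers with F ≥ 1 and F′ ≥ −1, and let d be an integer with d ≥ λμ. Set F″ = d + μF + λF′. Then: (i) 2F″ > d; (ii) for every integer e, if 2F > e then 2F″ > μe; (iii) if F′ ≥ 1, then for every integer e′, if 2F′ > e′ then 2F″ > λe′; (iv) if F′ = a′₁a′₂ − a′₁ − a′₂ for some relatively prime integers a′₁, a′₂ ≥ 2, then 2F″ > λ·a′₁·a′₂. -/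
/-- The inductive step showing that gluings preserve Condition (*):
with `λ, μ ≥ 2`, `F ≥ 1`, `F' ≥ −1`, `d ≥ λμ`, and `F'' = d + μF + λF'`, we have
(i) `2F'' > d`; (ii) if `2F > e` then `2F'' > μe`; (iii) if `F' ≥ 1` and `2F' > e'`
then `2F'' > λe'`; (iv) if `F' = a₁'a₂' − a₁' − a₂'` for some coprime integers
`a₁', a₂' ≥ 2`, then `2F'' > λa₁'a₂'`. -/
theorem stmt_9 (lam mu F F' d F'' : ℤ) (hlam : 2 ≤ lam) (hmu : 2 ≤ mu)
    (hF : 1 ≤ F) (hF' : -1 ≤ F') (hd : lam * mu ≤ d)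
    (hF'' : F'' = d + mu * F + lam * F') :
    2 * F'' > d ∧
    (∀ e : ℤ, 2 * F > e → 2 * F'' > mu * e) ∧
    (1 ≤ F' → ∀ e' : ℤ, 2 * F' > e' → 2 * F'' > lam * e') ∧
    (∀ a₁' a₂' : ℤ, 2 ≤ a₁' → 2 ≤ a₂' → Int.gcd a₁' a₂' = 1 →
      F' = a₁' * a₂' - a₁' - a₂' → 2 * F'' > lam * (a₁' * a₂')) := by
  have hmuF : mu ≤ mu * F := le_mul_of_one_le_right (by lia) hF
  have hlamF' : -lam ≤ lam * F' := by nlinarith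
  have hlammu : lam * 2 ≤ lam * mu := mul_le_mul_of_nonneg_left hmu (by lia)
  subst hF''
  refine ⟨by lia, fun e he => ?_, fun _ e' he' => ?_, fun a b ha hb _ hab => ?_⟩
  · have : mu * e < mu * (2 * F) := mul_lt_mul_of_pos_left he (by lia)
    linarith
  · have : lam * e' < lam * (2 * F') := mul_lt_mul_of_pos_left he' (by lia)
    linarith
  · have hprod : 0 ≤ (a - 2) * (b - 2) := mul_nonneg (by lia) (by lia)
    have : lam * (a * b - 4) ≤ lam * (2 * F') :=
      mul_le_mul_of_nonneg_left (by linarith) (by lia)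
    linarith
end
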